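/- arXiv:2603.18177 — 2 statements merged into one kernel-verified Lean document; each statement's English description precedes it below -/
import Mathlib

section
/- Let W be an m×n real matrix, q ∈ ℝⁿ, b ∈ ℝᵐ. If both the primal feasible set { y ∈ ℝⁿ : W y ≥ b } and the dual feasible set { γ ∈ ℝᵐ : γ ≥ 0, Wᵀγ = q } are nonempty, then sInf { qᵀy : W y ≥ b } = sSup { γᵀb : γ ≥ 0, Wᵀγ = q }, and both values are finite. In particular, with b = h − T x, the second-stage value function Q(x) is exactly the supremum of the Benders' cut values γᵀ(h − T x) over all dual-feasible γ, so the outer problem using the full set of dual-feasible multipliers represents Q exactly. -/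
open Matrix

/-!
Strong duality holds over every linearly ordered field, with both optima attained. An optimal pair
`(y, γ)` is a solution of the linear system `b ≤ W y`, `0 ≤ γ`, `Wᵀ γ = q`, `q ⬝ᵥ y ≤ γ ⬝ᵥ b`. By
the theorem of the alternative, if this system had no solution there would be `t ≥ 0`, `u ≥ 0` and
`r` with `Wᵀ u = t q`, `t b ≤ W r` and `q ⬝ᵥ r < u ⬝ᵥ b`. For `t > 0` this contradicts weak duality
for the pair `(r / t, u / t)`; for `t = 0` it contradicts the feasibility of one of the two
programs. The alternative itself follows from Farkas' lemma, proved algebraically by induction on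
the number of generators of the cone.
-/

section Farkas

open PointedCone

section OrderedRing

variable {R M N : Type*} [CommRing R] [PartialOrder R] [IsOrderedRing R]
  [AddCommGroup M] [Module R M] [AddCommGroup N] [Module R N]

theorem transvection_mem_dual_insert {p : M →ₗ[R] N →ₗ[R] R} {s : Set M} {a : M} {w y : N}
    (haw : p a w = -1) (hy : y ∈ dual (p.compl₂ (LinearMap.transvection (p a) w)) s) :
    LinearMap.transvection (p a) w y ∈ dual p (insert a s) := by
  rintro x (rfl | hx)
  · simp [LinearMap.transvection.apply, haw]
  · exact hy hx

theorem exists_mem_hull_insert_of_compl₂_transvection_eq {p : M →ₗ[R] N →ₗ[R] R} {s : Set M}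
    {a c d : M} {w : N} (hw : w ∈ dual p s) (hcw : p c w ≤ 0) (hd : d ∈ hull R s)
    (h : p.compl₂ (LinearMap.transvection (p a) w) d =
      p.compl₂ (LinearMap.transvection (p a) w) c) :
    ∃ e ∈ hull R (insert a s), p e = p c := by
  have hdw : 0 ≤ p d w := by
    rw [← dual_hull] at hw
    exact hw hd
  refine ⟨(p d w - p c w) • a + d, add_mem ?_ ?_, ?_⟩
  · exact PointedCone.smul_mem _ (sub_nonneg.2 (hcw.trans hdw)) (subset_hull (Set.mem_insert a s))
  · exact Submodule.span_mono (Set.subset_insert a s) hd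
  · ext y
    have hy := LinearMap.congr_fun h y
    simp only [LinearMap.compl₂_apply, LinearMap.transvection.apply, map_add, map_smul,
      smul_eq_mul] at hy
    simp only [map_add, map_smul, LinearMap.add_apply, LinearMap.smul_apply, smul_eq_mul]
    linear_combination hy

end OrderedRing

variable {𝕜 M N : Type*} [Field 𝕜] [LinearOrder 𝕜] [IsStrictOrderedRing 𝕜]
  [AddCommGroup M] [Module 𝕜 M] [AddCommGroup N] [Module 𝕜 N]

theorem exists_mem_dual_apply_eq_neg_one {p : M →ₗ[𝕜] N →ₗ[𝕜] 𝕜} {s : Set M} {a c : M}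
    (hc : c ∈ dual p.flip (dual p (insert a s))) (hcs : c ∉ dual p.flip (dual p s)) :
    ∃ w ∈ dual p s, p c w ≤ 0 ∧ p a w = -1 := by
  obtain ⟨z, hz, hcz⟩ : ∃ z ∈ dual p s, p c z < 0 := by
    simpa only [mem_dual (s := (dual p s : Set N)), not_forall, not_le, exists_prop,
      SetLike.mem_coe, LinearMap.flip_apply] using hcs
  have haz : p a z < 0 := by
    by_contra! haz
    refine hcz.not_ge (hc ?_)
    rintro x (rfl | hx)
    exacts [haz, hz hx]
  have hpos : 0 < (-p a z)⁻¹ := inv_pos.2 (neg_pos.2 haz)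
  refine ⟨(-p a z)⁻¹ • z, PointedCone.smul_mem _ hpos.le hz, ?_, ?_⟩
  · simpa using mul_nonpos_of_nonneg_of_nonpos hpos.le hcz.le
  · simp [inv_neg, haz.ne]

/-- **Farkas' lemma**. -/
theorem exists_mem_hull_of_mem_dual_dual {s : Set M} (hs : s.Finite) {p : M →ₗ[𝕜] N →ₗ[𝕜] 𝕜}
    {c : M} (hc : c ∈ dual p.flip (dual p s)) : ∃ d ∈ hull 𝕜 s, p d = p c := by
  induction s, hs using Set.Finite.induction_on generalizing p with
  | empty =>
    refine ⟨0, zero_mem _, ?_⟩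
    ext y
    have hy : 0 ≤ p c y := hc (by simp)
    have hny : 0 ≤ p c (-y) := hc (by simp)
    rw [map_neg] at hny
    simpa using le_antisymm hy (by linarith)
  | @insert a s _ _ ih =>
    by_cases hcs : c ∈ dual p.flip (dual p s)
    · obtain ⟨d, hd, hdc⟩ := ih hcs
      exact ⟨d, Submodule.span_mono (Set.subset_insert a s) hd, hdc⟩
    obtain ⟨w, hw, hcw, haw⟩ := exists_mem_dual_apply_eq_neg_one hc hcs
    -- As `p a w = -1`, the transvection projects along `w` onto `ker (p a)`, and pulling the
    -- pairing back along it disposes of the generator `a`.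
    obtain ⟨d, hd, hdc⟩ := ih (p := p.compl₂ (LinearMap.transvection (p a) w))
      fun _ hy => hc (transvection_mem_dual_insert haw hy)
    exact exists_mem_hull_insert_of_compl₂_transvection_eq hw hcw hd hdc

end Farkas

section LinearSystems

variable {𝕜 ι ι' κ : Type*} [Field 𝕜] [LinearOrder 𝕜] [IsStrictOrderedRing 𝕜]
  [Fintype ι] [Fintype ι'] [Fintype κ]

theorem exists_nonneg_vecMul_eq_of_forall_dotProduct_nonneg {A : Matrix ι κ 𝕜} {c : κ → 𝕜}
    (h : ∀ x, 0 ≤ A *ᵥ x → 0 ≤ c ⬝ᵥ x) : ∃ γ, 0 ≤ γ ∧ γ ᵥ* A = c := by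
  obtain ⟨d, hd, hdc⟩ := exists_mem_hull_of_mem_dual_dual (Set.finite_range A.row)
    (p := dotProductBilin 𝕜 𝕜) (c := c) fun x hx => h x fun i => hx ⟨i, rfl⟩
  obtain ⟨γ, hγ⟩ := (Submodule.mem_span_range_iff_exists_fun _).1 hd
  refine ⟨fun i => γ i, fun i => (γ i).2, ?_⟩
  rw [← dotProduct_eq _ _ (LinearMap.congr_fun hdc), ← hγ, vecMul_eq_sum]
  rfl

/-- **Gale's theorem of the alternative**. -/
theorem exists_le_mulVec_of_forall_dotProduct_nonpos {A : Matrix ι κ 𝕜} {b : ι → 𝕜}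
    (h : ∀ γ, 0 ≤ γ → γ ᵥ* A = 0 → γ ⬝ᵥ b ≤ 0) : ∃ y, b ≤ A *ᵥ y := by
  by_contra! hinfeasible
  have hhom : ∀ x, 0 ≤ fromCols A (replicateCol Unit (-b)) *ᵥ x →
      0 ≤ Sum.elim (0 : κ → 𝕜) (fun _ : Unit => -1) ⬝ᵥ x := by
    intro x hx
    obtain ⟨y, t, rfl⟩ : ∃ y t, x = Sum.elim y fun _ : Unit => t :=
      ⟨x ∘ Sum.inl, x (Sum.inr ()), by ext (_ | _) <;> rfl⟩
    suffices t ≤ 0 by simpa [dotProduct] using this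
    by_contra! ht
    refine hinfeasible (t⁻¹ • y) fun i => ?_
    have hi : 0 ≤ (A *ᵥ y) i - b i * t := by
      simpa [mulVec, dotProduct, sub_eq_add_neg] using hx i
    rw [mulVec_smul, Pi.smul_apply, smul_eq_mul, le_inv_mul_iff₀' ht]
    exact sub_nonneg.1 hi
  obtain ⟨γ, hγ, hγA⟩ := exists_nonneg_vecMul_eq_of_forall_dotProduct_nonneg hhom
  rw [vecMul_fromCols, Sum.elim_eq_iff] at hγA
  have hγb : γ ⬝ᵥ b = 1 := by simpa [vecMul, dotProduct] using congr_fun hγA.2 ()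
  exact (h γ hγ hγA.1).not_gt (hγb ▸ one_pos)

/-- **Motzkin's transposition theorem**, without strict inequalities. -/
theorem exists_le_mulVec_and_mulVec_eq_of_forall_dotProduct_nonpos
    {A : Matrix ι κ 𝕜} {b : ι → 𝕜} {B : Matrix ι' κ 𝕜} {d : ι' → 𝕜}
    (h : ∀ γ μ, 0 ≤ γ → γ ᵥ* A + μ ᵥ* B = 0 → γ ⬝ᵥ b + μ ⬝ᵥ d ≤ 0) :
    ∃ y, b ≤ A *ᵥ y ∧ B *ᵥ y = d := by
  obtain ⟨y, hy⟩ := exists_le_mulVec_of_forall_dotProduct_nonpos (A := fromRows A (fromRows B (-B)))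
    (b := Sum.elim b (Sum.elim d (-d))) fun γ hγ hγA => by
      obtain ⟨γ, μ, ν, rfl⟩ : ∃ γ' μ ν, γ = Sum.elim γ' (Sum.elim μ ν) :=
        ⟨γ ∘ Sum.inl, γ ∘ Sum.inr ∘ Sum.inl, γ ∘ Sum.inr ∘ Sum.inr, by ext (_ | _ | _) <;> rfl⟩
      have hle := h γ (μ - ν) (fun i => hγ (Sum.inl i)) (by
        simpa [sub_eq_add_neg, add_vecMul, neg_vecMul, vecMul_neg] using hγA)
      simpa [sub_dotProduct, sub_eq_add_neg] using hle
  simp only [fromRows_mulVec, neg_mulVec, Sum.elim_le_elim_iff, neg_le_neg_iff] at hy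
  exact ⟨y, hy.1, le_antisymm hy.2.2 hy.2.1⟩

end LinearSystems

section WeakDuality

variable {R ι κ : Type*} [CommSemiring R] [Fintype ι] [Fintype κ] {W : Matrix ι κ R}
  {q : κ → R} {b : ι → R}

theorem dotProduct_le_dotProduct_of_feasible [PartialOrder R] [IsOrderedRing R] {y : κ → R}
    {γ : ι → R} (hy : b ≤ W *ᵥ y) (hγ : 0 ≤ γ) (hγq : Wᵀ *ᵥ γ = q) : γ ⬝ᵥ b ≤ q ⬝ᵥ y := by
  rw [← hγq, mulVec_transpose, ← dotProduct_mulVec]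
  exact dotProduct_le_dotProduct_of_nonneg_left hy hγ

theorem dotProduct_le_dotProduct_of_homogenized_feasible [LinearOrder R] [IsStrictOrderedRing R]
    (hprimal : {y : κ → R | b ≤ W *ᵥ y}.Nonempty)
    (hdual : {γ : ι → R | 0 ≤ γ ∧ Wᵀ *ᵥ γ = q}.Nonempty) {t : R} {r : κ → R} {u : ι → R}
    (ht : 0 ≤ t) (hr : t • b ≤ W *ᵥ r) (hu : 0 ≤ u) (huq : Wᵀ *ᵥ u = t • q) :
    u ⬝ᵥ b ≤ q ⬝ᵥ r := by
  rcases ht.eq_or_lt with rfl | ht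
  · obtain ⟨y, hy⟩ := hprimal
    obtain ⟨γ, hγ, hγq⟩ := hdual
    rw [zero_smul] at hr huq
    calc
      u ⬝ᵥ b ≤ 0 ⬝ᵥ y := dotProduct_le_dotProduct_of_feasible hy hu huq
      _ = γ ⬝ᵥ 0 := by simp
      _ ≤ q ⬝ᵥ r := dotProduct_le_dotProduct_of_feasible hr hγ hγq
  · have hle := dotProduct_le_dotProduct_of_feasible hr hu huq
    rw [dotProduct_smul, smul_dotProduct, smul_eq_mul, smul_eq_mul] at hle
    exact le_of_mul_le_mul_left hle ht

end WeakDuality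

section StrongDuality

variable {𝕜 ι κ : Type*} [Field 𝕜] [LinearOrder 𝕜] [IsStrictOrderedRing 𝕜]
  [Fintype ι] [Fintype κ] {W : Matrix ι κ 𝕜} {q : κ → 𝕜} {b : ι → 𝕜}

theorem exists_feasible_pair_of_homogenized_weak_duality
    (h : ∀ (t : 𝕜) (r : κ → 𝕜) (u : ι → 𝕜), 0 ≤ t → t • b ≤ W *ᵥ r → 0 ≤ u → Wᵀ *ᵥ u = t • q →
      u ⬝ᵥ b ≤ q ⬝ᵥ r) :
    ∃ y γ, b ≤ W *ᵥ y ∧ 0 ≤ γ ∧ Wᵀ *ᵥ γ = q ∧ q ⬝ᵥ y ≤ γ ⬝ᵥ b := by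
  classical
  obtain ⟨x, hxle, hxeq⟩ := exists_le_mulVec_and_mulVec_eq_of_forall_dotProduct_nonpos
    (A := fromRows (fromBlocks W 0 0 (1 : Matrix ι ι 𝕜))
      (replicateRow Unit (Sum.elim (-q) b)))
    (b := Sum.elim (Sum.elim b 0) 0) (B := fromCols (0 : Matrix κ κ 𝕜) Wᵀ) (d := q)
    fun γ μ hγ hγμ => by
      -- `u`, `s`, `t`, `μ` are the multipliers of `b ≤ W y`, `0 ≤ γ`, `q ⬝ᵥ y ≤ γ ⬝ᵥ b` and
      -- `Wᵀ γ = q`.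
      obtain ⟨u, s, t, rfl⟩ : ∃ u s t, γ = Sum.elim (Sum.elim u s) fun _ : Unit => t :=
        ⟨γ ∘ Sum.inl ∘ Sum.inl, γ ∘ Sum.inl ∘ Sum.inr, γ (Sum.inr ()), by
          ext ((_ | _) | _) <;> rfl⟩
      have huq : Wᵀ *ᵥ u = t • q := by
        ext j
        have hj : (u ᵥ* W) j - t * q j = 0 := by
          simpa [vecMul_fromBlocks, vecMul, dotProduct, sub_eq_add_neg] using
            congr_fun hγμ (Sum.inl j)
        rw [mulVec_transpose]
        exact sub_eq_zero.1 hj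
      have hr : t • b ≤ W *ᵥ (-μ) := fun i => by
        have hi : s i + t * b i + (W *ᵥ μ) i = 0 := by
          simpa [vecMul_fromBlocks, vecMul_transpose, vecMul, dotProduct] using
            congr_fun hγμ (Sum.inr i)
        have hs : 0 ≤ s i := hγ (Sum.inl (Sum.inr i))
        rw [mulVec_neg, Pi.neg_apply, Pi.smul_apply, smul_eq_mul]
        linarith
      have hle := h t (-μ) u (hγ (Sum.inr ())) hr (fun i => hγ (Sum.inl (Sum.inl i))) huq
      rw [dotProduct_neg, dotProduct_comm q] at hle
      simpa using le_neg_iff_add_nonpos_right.1 hle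
  obtain ⟨y, γ, rfl⟩ : ∃ y γ, x = Sum.elim y γ :=
    ⟨x ∘ Sum.inl, x ∘ Sum.inr, (Sum.elim_comp_inl_inr x).symm⟩
  simp only [fromRows_mulVec, fromBlocks_mulVec, Sum.elim_le_elim_iff, Sum.elim_comp_inl,
    Sum.elim_comp_inr, zero_mulVec, one_mulVec, add_zero, zero_add] at hxle
  have hgap : 0 ≤ -(q ⬝ᵥ y) + γ ⬝ᵥ b := by
    simpa [mulVec, dotProduct_comm] using hxle.2 ()
  exact ⟨y, γ, hxle.1.1, hxle.1.2, by simpa using hxeq, by linarith⟩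

theorem lp_strong_duality_second_stage_general (W : Matrix ι κ 𝕜) (q : κ → 𝕜) (b : ι → 𝕜)
    (hprimal : {y : κ → 𝕜 | b ≤ W *ᵥ y}.Nonempty)
    (hdual : {γ : ι → 𝕜 | 0 ≤ γ ∧ Wᵀ *ᵥ γ = q}.Nonempty) :
    ∃ v, IsLeast {z : 𝕜 | ∃ y : κ → 𝕜, b ≤ W *ᵥ y ∧ z = q ⬝ᵥ y} v ∧
      IsGreatest {z : 𝕜 | ∃ γ : ι → 𝕜, 0 ≤ γ ∧ Wᵀ *ᵥ γ = q ∧ z = γ ⬝ᵥ b} v := by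
  obtain ⟨y, γ, hy, hγ, hγq, hle⟩ := exists_feasible_pair_of_homogenized_weak_duality
    fun _ _ _ => dotProduct_le_dotProduct_of_homogenized_feasible hprimal hdual
  have heq : q ⬝ᵥ y = γ ⬝ᵥ b := hle.antisymm (dotProduct_le_dotProduct_of_feasible hy hγ hγq)
  refine ⟨q ⬝ᵥ y, ⟨⟨y, hy, rfl⟩, ?_⟩, ⟨⟨γ, hγ, hγq, heq⟩, ?_⟩⟩
  · rintro _ ⟨y', hy', rfl⟩
    exact heq.trans_le (dotProduct_le_dotProduct_of_feasible hy' hγ hγq)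
  · rintro _ ⟨γ', hγ', hγq', rfl⟩
    exact dotProduct_le_dotProduct_of_feasible hy hγ' hγq'

end StrongDuality

/-- Linear programming strong duality for the second-stage problem: if both the
primal feasible set `{y : W y ≥ b}` and the dual feasible set
`{γ : γ ≥ 0, Wᵀγ = q}` are nonempty, then
`sInf { qᵀy : W y ≥ b } = sSup { γᵀb : γ ≥ 0, Wᵀγ = q }` and both values are
finite (the primal values are bounded below and the dual values bounded above). -/
theorem lp_strong_duality_second_stage (m n : ℕ)
    (W : Matrix (Fin m) (Fin n) ℝ) (q : Fin n → ℝ) (b : Fin m → ℝ)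
    (hprimal : {y : Fin n → ℝ | b ≤ W *ᵥ y}.Nonempty)
    (hdual : {γ : Fin m → ℝ | 0 ≤ γ ∧ Wᵀ *ᵥ γ = q}.Nonempty) :
    sInf {z : ℝ | ∃ y : Fin n → ℝ, b ≤ W *ᵥ y ∧ z = q ⬝ᵥ y} =
      sSup {z : ℝ | ∃ γ : Fin m → ℝ, 0 ≤ γ ∧ Wᵀ *ᵥ γ = q ∧ z = γ ⬝ᵥ b} ∧
    BddBelow {z : ℝ | ∃ y : Fin n → ℝ, b ≤ W *ᵥ y ∧ z = q ⬝ᵥ y} ∧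
    BddAbove {z : ℝ | ∃ γ : Fin m → ℝ, 0 ≤ γ ∧ Wᵀ *ᵥ γ = q ∧ z = γ ⬝ᵥ b} := by
  obtain ⟨v, hleast, hgreatest⟩ := lp_strong_duality_second_stage_general W q b hprimal hdual
  exact ⟨hleast.csInf_eq.trans hgreatest.csSup_eq.symm, hleast.bddBelow, hgreatest.bddAbove⟩
end

section
/- Let W be an m×n real matrix, T an m×k real matrix, q ∈ ℝⁿ, h ∈ ℝᵐ, c ∈ ℝᵏ, and X ⊆ ℝᵏ. Suppose γ ∈ ℝᵐ satisfies γ ≥ 0 and Wᵀγ = q; suppose x* ∈ X satisfies (c − Tᵀγ)ᵀx* ≤ (c − Tᵀγ)ᵀx for all x ∈ X; and suppose y* ∈ ℝⁿ satisfies W y* ≥ h − T x* and qᵀy* = γᵀ(h − T x*). Then (x*, y*) is optimal for the full two-stage problem: for every x ∈ X and y with W y ≥ h − T x, one has cᵀx + qᵀy ≥ cᵀx* + qᵀy*. -/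
open Matrix

/-!
Pricing out the linking constraint with `γ` gives the Lagrangian
`(c - Tᵀγ)ᵀx + γᵀh = cᵀx + γᵀ(h - T x)`. By weak duality in the second stage it bounds the
two-stage cost of every feasible `(x, y)` from below. It is minimized at `x*`, and there the
second-stage gap vanishes, so its minimum is the cost of `(x*, y*)`.
-/

section LinearDuality

variable {R m n : Type*} [Fintype m] [Fintype n]

theorem sub_transpose_mulVec_dotProduct_add_dotProduct [NonUnitalCommRing R]
    (A : Matrix m n R) (c x : n → R) (u b : m → R) :
    (c - Aᵀ *ᵥ u) ⬝ᵥ x + u ⬝ᵥ b = c ⬝ᵥ x + u ⬝ᵥ (b - A *ᵥ x) := by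
  rw [sub_dotProduct, mulVec_transpose, ← dotProduct_mulVec, dotProduct_sub, sub_add_eq_add_sub,
    add_sub_assoc]

theorem dotProduct_le_transpose_mulVec_dotProduct [CommSemiring R] [PartialOrder R]
    [IsOrderedRing R] {A : Matrix m n R} {u b : m → R} {y : n → R}
    (hu : 0 ≤ u) (hy : b ≤ A *ᵥ y) : u ⬝ᵥ b ≤ (Aᵀ *ᵥ u) ⬝ᵥ y := by
  rw [mulVec_transpose, ← dotProduct_mulVec]
  exact dotProduct_le_dotProduct_of_nonneg_left hy hu

end LinearDuality

theorem two_stage_optimality_certificate_general {R m n k : Type*}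
    [CommRing R] [PartialOrder R] [IsOrderedRing R] [Fintype m] [Fintype n] [Fintype k]
    {W : Matrix m n R} {T : Matrix m k R} {q : n → R} {h : m → R} {c : k → R}
    {X : Set (k → R)} {γ : m → R} {xstar : k → R} {ystar : n → R}
    (hγ : 0 ≤ γ) (hdual : Wᵀ *ᵥ γ = q)
    (hxmin : ∀ x ∈ X, (c - Tᵀ *ᵥ γ) ⬝ᵥ xstar ≤ (c - Tᵀ *ᵥ γ) ⬝ᵥ x)
    (hgap : q ⬝ᵥ ystar ≤ γ ⬝ᵥ (h - T *ᵥ xstar)) :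
    ∀ x ∈ X, ∀ y : n → R, h - T *ᵥ x ≤ W *ᵥ y →
      c ⬝ᵥ xstar + q ⬝ᵥ ystar ≤ c ⬝ᵥ x + q ⬝ᵥ y := by
  intro x hx y hy
  have weak_duality : γ ⬝ᵥ (h - T *ᵥ x) ≤ q ⬝ᵥ y :=
    hdual ▸ dotProduct_le_transpose_mulVec_dotProduct hγ hy
  calc
    c ⬝ᵥ xstar + q ⬝ᵥ ystar
      ≤ c ⬝ᵥ xstar + γ ⬝ᵥ (h - T *ᵥ xstar) := by gcongr
    _ = (c - Tᵀ *ᵥ γ) ⬝ᵥ xstar + γ ⬝ᵥ h :=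
      (sub_transpose_mulVec_dotProduct_add_dotProduct T c xstar γ h).symm
    _ ≤ (c - Tᵀ *ᵥ γ) ⬝ᵥ x + γ ⬝ᵥ h := by gcongr; exact hxmin x hx
    _ = c ⬝ᵥ x + γ ⬝ᵥ (h - T *ᵥ x) :=
      sub_transpose_mulVec_dotProduct_add_dotProduct T c x γ h
    _ ≤ c ⬝ᵥ x + q ⬝ᵥ y := by gcongr

/-- Optimality certificate for the full two-stage problem: a dual-feasible `γ`,
a minimizer `x*` of the pricing problem with modified costs `c - Tᵀγ`, and a
second-stage point `y*` with zero duality gap together certify optimality of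
`(x*, y*)`. -/
theorem two_stage_optimality_certificate (m n k : ℕ)
    (W : Matrix (Fin m) (Fin n) ℝ) (T : Matrix (Fin m) (Fin k) ℝ)
    (q : Fin n → ℝ) (h : Fin m → ℝ) (c : Fin k → ℝ)
    (X : Set (Fin k → ℝ)) (γ : Fin m → ℝ)
    (xstar : Fin k → ℝ) (ystar : Fin n → ℝ)
    (hγ : 0 ≤ γ) (hdual : Wᵀ *ᵥ γ = q)
    (hxmem : xstar ∈ X)
    (hxmin : ∀ x ∈ X, (c - Tᵀ *ᵥ γ) ⬝ᵥ xstar ≤ (c - Tᵀ *ᵥ γ) ⬝ᵥ x)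
    (hyfeas : h - T *ᵥ xstar ≤ W *ᵥ ystar)
    (hgap : q ⬝ᵥ ystar = γ ⬝ᵥ (h - T *ᵥ xstar)) :
    ∀ x ∈ X, ∀ y : Fin n → ℝ, h - T *ᵥ x ≤ W *ᵥ y →
      c ⬝ᵥ xstar + q ⬝ᵥ ystar ≤ c ⬝ᵥ x + q ⬝ᵥ y :=
  two_stage_optimality_certificate_general hγ hdual hxmin hgap.le
end
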